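/- Let H be a hypothesis class of functions X → {0,1} with |H| ≥ k for some integer k ≥ 1, and assume every pair of distinct hypotheses differs on some point. Then there exists a finite full binary tree T labeled by X, shattered by H (every branch realizable by some h ∈ H), such that E_T ≥ 2 − 2^{2−k}. -/

import Mathlib

/-- Finite full rooted ordered binary trees with internal nodes labeled by `X`. -/
inductive BTree (X : Type) : Type
  | leaf : BTree X
  | node : X → BTree X → BTree X → BTree X

namespace BTree

variable {X : Type}

/-- The branches (root-to-leaf paths) of a tree, each recorded as the list of
edge labels (`false` = left/0, `true` = right/1) along the path. -/
def branches : BTree X → List (List Bool)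
  | leaf => [[]]
  | node _ l r => (branches l).map (List.cons false) ++ (branches r).map (List.cons true)

/-- The expected length of a uniformly random branch:
`E T = ∑_{b ∈ B(T)} |b| · 2^{-|b|}`. -/
noncomputable def E (t : BTree X) : ℝ :=
  ((branches t).map (fun b => (b.length : ℝ) * (2 : ℝ) ^ (-(b.length : ℤ)))).sum

/-- The internal-node positions of the tree, as paths from the root. -/
def nodePaths : BTree X → List (List Bool)
  | leaf => []
  | node _ l r =>
      [] :: ((nodePaths l).map (List.cons false) ++ (nodePaths r).map (List.cons true))

/-- `w` is a weight function for `t`: at every internal node, the two outgoing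
edges get nonnegative weights summing to `1`. -/
def IsWeightFn (t : BTree X) (w : List Bool → Bool → ℝ) : Prop :=
  ∀ p ∈ nodePaths t, 0 ≤ w p false ∧ 0 ≤ w p true ∧ w p false + w p true = 1

/-- The total weight of a branch `b`: the sum of the weights of its edges. -/
def branchWeight (w : List Bool → Bool → ℝ) (b : List Bool) : ℝ :=
  ((List.range b.length).map (fun i => w (b.take i) (b.getD i false))).sum

/-- The subtree of `t` rooted at the end of the path `p` (junk value `leaf`
if the path leaves the tree). -/
def subtreeAt : BTree X → List Bool → BTree X
  | t, [] => t
  | leaf, _ :: _ => leaf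
  | node _ l r, d :: p => subtreeAt (if d then r else l) p

/-- A tree is quasi-balanced if some weight function gives all branches the
same total weight `E T / 2`. -/
def QuasiBalanced (t : BTree X) : Prop :=
  ∃ w : List Bool → Bool → ℝ, IsWeightFn t w ∧ ∀ b ∈ branches t, branchWeight w b = E t / 2

/-- A tree is monotone if every subtree's expected branch length is at least
that of each of its immediate subtrees. -/
def IsMonotone : BTree X → Prop
  | leaf => True
  | node x l r =>
      E l ≤ E (node x l r) ∧ E r ≤ E (node x l r) ∧ IsMonotone l ∧ IsMonotone r

/-- The minimum length of a branch of the tree. -/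
def minBranch : BTree X → ℕ
  | leaf => 0
  | node _ l r => 1 + min (minBranch l) (minBranch r)

/-- The sequence of labeled examples along the path `p`: at a node labeled `x`,
following the edge labeled `d` produces the example `(x, d)`. -/
def examplesAlong : BTree X → List Bool → List (X × Bool)
  | leaf, _ => []
  | node _ _ _, [] => []
  | node x l r, d :: p => (x, d) :: examplesAlong (if d then r else l) p

end BTree

/-- `T` is shattered by `H`: every branch of `T` is realizable by some
hypothesis in `H`. -/
def Shattered {X : Type} (H : Set (X → Bool)) (T : BTree X) : Prop :=
  ∀ b ∈ BTree.branches T, ∃ h ∈ H,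
    ∀ e ∈ BTree.examplesAlong T b, h e.1 = e.2

theorem BTree.mass_eq {X : Type} (t : BTree X) :
    ((BTree.branches t).map (fun b => (2 : ℝ) ^ (-(b.length : ℤ)))).sum = 1 := by
  induction t with
  | leaf => simp [BTree.branches]
  | node x l r ihl ihr =>
    have key : ∀ L : List (List Bool), ∀ d : Bool,
        ((L.map (List.cons d)).map (fun b => (2 : ℝ) ^ (-(b.length : ℤ)))).sum
          = (L.map (fun b => (2 : ℝ) ^ (-(b.length : ℤ)))).sum / 2 := by
      intro L d
      induction L with
      | nil => simp
      | cons a L ih =>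
        simp only [List.map_cons, List.sum_cons, ih, List.length_cons]
        have : (2 : ℝ) ^ (-((a.length + 1 : ℕ) : ℤ)) = (2 : ℝ) ^ (-(a.length : ℤ)) / 2 := by
          simp only [zpow_neg, zpow_natCast, pow_succ]
          field_simp
        rw [this]; ring
    rw [BTree.branches, List.map_append, List.sum_append, key, key, ihl, ihr]
    norm_num

theorem BTree.E_node {X : Type} (x : X) (l r : BTree X) :
    BTree.E (BTree.node x l r) = 1 + (BTree.E l + BTree.E r) / 2 := by
  have key : ∀ L : List (List Bool), ∀ d : Bool,
      ((L.map (List.cons d)).map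
          (fun b => (b.length : ℝ) * (2 : ℝ) ^ (-(b.length : ℤ)))).sum
        = (L.map (fun b => (b.length : ℝ) * (2 : ℝ) ^ (-(b.length : ℤ)))).sum / 2
          + (L.map (fun b => (2 : ℝ) ^ (-(b.length : ℤ)))).sum / 2 := by
    intro L d
    induction L with
    | nil => simp
    | cons a L ih =>
      simp only [List.map_cons, List.sum_cons, ih, List.length_cons]
      have : (2 : ℝ) ^ (-((a.length + 1 : ℕ) : ℤ)) = (2 : ℝ) ^ (-(a.length : ℤ)) / 2 := by
        simp only [zpow_neg, zpow_natCast, pow_succ]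
        field_simp
      rw [this]; push_cast; ring
  unfold BTree.E
  rw [BTree.branches, List.map_append, List.sum_append, key, key, BTree.mass_eq, BTree.mass_eq]
  ring

theorem shattered_aux {X : Type} (n : ℕ) : ∀ H : Finset (X → Bool), H.card = n + 1 →
    ∃ T : BTree X, Shattered (↑H : Set (X → Bool)) T ∧
      2 - 2 * (1 / 2 : ℝ) ^ n ≤ BTree.E T := by
  induction n using Nat.strong_induction_on with
  | _ n ih =>
  intro H hH
  rcases Nat.eq_zero_or_pos n with rfl | hn
  · refine ⟨BTree.leaf, ?_, ?_⟩
    · intro b _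
      obtain ⟨h, hh⟩ := Finset.card_pos.1 (show 0 < H.card by omega)
      exact ⟨h, hh, by simp [BTree.examplesAlong]⟩
    · simp [BTree.E, BTree.branches]
  · obtain ⟨f, hf, g, hg, hfg⟩ := Finset.one_lt_card.1 (show 1 < H.card by omega)
    obtain ⟨x, hx⟩ := Function.ne_iff.1 hfg
    have hsum := Finset.card_filter_add_card_filter_not (s := H) (fun h => h x = true)
    have h1 : 0 < (H.filter (fun h => h x = true)).card := by
      rw [Finset.card_pos]
      cases hfx : f x
      · exact ⟨g, by simp [hg]; simpa [hfx] using hx⟩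
      · exact ⟨f, by simp [hf, hfx]⟩
    have h0 : 0 < (H.filter (fun h => ¬ h x = true)).card := by
      rw [Finset.card_pos]
      cases hfx : f x
      · exact ⟨f, by simp [hf, hfx]⟩
      · exact ⟨g, by simp [hg]; simpa [hfx] using hx⟩
    obtain ⟨a, ha⟩ := Nat.exists_eq_succ_of_ne_zero h1.ne'
    obtain ⟨b, hb⟩ := Nat.exists_eq_succ_of_ne_zero h0.ne'
    obtain ⟨R, hR, hRE⟩ := ih a (by omega) _ ha
    obtain ⟨L, hL, hLE⟩ := ih b (by omega) _ hb
    refine ⟨BTree.node x L R, ?_, ?_⟩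
    · intro p hp
      simp only [BTree.branches, List.mem_append, List.mem_map] at hp
      rcases hp with ⟨q, hq, rfl⟩ | ⟨q, hq, rfl⟩
      · obtain ⟨h, hh, hr⟩ := hL q hq
        simp at hh
        refine ⟨h, hh.1, ?_⟩
        intro e he
        simp only [BTree.examplesAlong, List.mem_cons] at he
        rcases he with rfl | he
        · exact hh.2
        · exact hr e (by simpa using he)
      · obtain ⟨h, hh, hr⟩ := hR q hq
        simp at hh
        refine ⟨h, hh.1, ?_⟩
        intro e he
        simp only [BTree.examplesAlong, List.mem_cons] at he
        rcases he with rfl | he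
        · exact hh.2
        · exact hr e (by simpa using he)
    · rw [BTree.E_node]
      have hn' : n = a + b + 1 := by omega
      have ha1 : (1 / 2 : ℝ) ^ a ≤ 1 := pow_le_one₀ (by norm_num) (by norm_num)
      have hb1 : (1 / 2 : ℝ) ^ b ≤ 1 := pow_le_one₀ (by norm_num) (by norm_num)
      rw [hn', pow_succ, pow_add]
      nlinarith [mul_nonneg (sub_nonneg.2 ha1) (sub_nonneg.2 hb1)]

/-- If `|H| ≥ k` (with `k ≥ 1`), then there is a tree shattered by `H` with
expected branch length at least `2 - 2^{2-k}`. -/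
theorem exists_shattered_tree_of_card_ge {X : Type} (k : ℕ) (hk : 1 ≤ k)
    (H : Finset (X → Bool)) (hcard : k ≤ H.card) :
    ∃ T : BTree X, Shattered (↑H : Set (X → Bool)) T ∧
      2 - (2 : ℝ) ^ ((2 : ℤ) - (k : ℤ)) ≤ BTree.E T := by
  obtain ⟨n, hn⟩ := Nat.exists_eq_succ_of_ne_zero (show H.card ≠ 0 by omega)
  obtain ⟨T, hT, hE⟩ := shattered_aux n H hn
  refine ⟨T, hT, le_trans ?_ hE⟩
  obtain ⟨m, rfl⟩ : ∃ m, k = m + 1 := ⟨k - 1, by omega⟩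
  have h1 : (2 : ℝ) ^ ((2 : ℤ) - ((m + 1 : ℕ) : ℤ)) = 2 * (1 / 2 : ℝ) ^ m := by
    rw [show (2 : ℤ) - ((m + 1 : ℕ) : ℤ) = 1 + -(m : ℤ) by push_cast; ring,
      zpow_add₀ (by norm_num)]
    simp
  have h2 : (1 / 2 : ℝ) ^ n ≤ (1 / 2 : ℝ) ^ m :=
    pow_le_pow_of_le_one (by norm_num) (by norm_num) (by omega)
  rw [h1]
  linarith
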